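/- arXiv:math/0109115 — 7 statements merged into one kernel-verified Lean document; each statement's English description precedes it below -/
import Mathlib

section
/- Let (pₘ)_{m≥1} be nonnegative reals and let ρ > 1 be such that Σ_{m≥1} pₘ ρᵐ < 1, and let p⋆ > 0. For k ≥ 0 let p^{*k} denote the k-fold convolution on ℕ (p^{*0}₀ = 1, p^{*0}ₙ = 0 for n ≥ 1, p^{*(k+1)}ₙ = Σ_{m=1}^{n} pₘ p^{*k}_{n−m}), and define qₙ = p⋆ Σ_{k=0}^{∞} p^{*k}ₙ. Then for every n ≥ 0, 0 ≤ qₙ ≤ (p⋆ / (1 − Σ_{m≥1} pₘ ρᵐ)) · ρ^{−n}; that is, the Taylor coefficients of ζ ↦ p⋆/(1 − Σ pₘ ζᵐ) at 0 decay geometrically at rate ρ. -/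
open scoped BigOperators

/-- Convolution of two sequences indexed by `ℕ`. -/
noncomputable def convSeq (p q : ℕ → ℝ) (n : ℕ) : ℝ :=
  ∑ m ∈ Finset.range (n + 1), p m * q (n - m)

/-- `k`-fold convolution power of a sequence (with `p^{*0} = δ₀`). -/
noncomputable def convPow (p : ℕ → ℝ) : ℕ → ℕ → ℝ
  | 0 => fun n => if n = 0 then 1 else 0
  | k + 1 => convSeq p (convPow p k)

/-!
The tilt `pₘ ↦ pₘ ρᵐ` commutes with convolution, so it is enough to bound `∑ₖ p^{*k}ₙ` when
`S = ∑ pₘ` is less than `1`. There each convolution with `p` multiplies a uniform bound by at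
most `S`, so `p^{*k}ₙ ≤ Sᵏ`, and the geometric series gives `∑ₖ p^{*k}ₙ ≤ (1 - S)⁻¹`.
-/

section Tilting

theorem convSeq_mul_pow (p q : ℕ → ℝ) (ρ : ℝ) (n : ℕ) :
    convSeq p q n * ρ ^ n = convSeq (fun m => p m * ρ ^ m) (fun m => q m * ρ ^ m) n := by
  simp only [convSeq, Finset.sum_mul]
  refine Finset.sum_congr rfl fun m hm => ?_
  rw [← pow_mul_pow_sub ρ (Finset.mem_range_succ_iff.mp hm), mul_mul_mul_comm]

theorem convPow_mul_pow (p : ℕ → ℝ) (ρ : ℝ) (k n : ℕ) :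
    convPow p k n * ρ ^ n = convPow (fun m => p m * ρ ^ m) k n := by
  induction k generalizing n with
  | zero => by_cases hn : n = 0 <;> simp [convPow, hn]
  | succ k ih => simp only [convPow, convSeq_mul_pow, ih]

end Tilting

section Bounds

variable {p q : ℕ → ℝ}

theorem convSeq_nonneg (hp : ∀ m, 0 ≤ p m) (hq : ∀ m, 0 ≤ q m) (n : ℕ) : 0 ≤ convSeq p q n :=
  Finset.sum_nonneg fun m _ => mul_nonneg (hp m) (hq (n - m))

theorem convSeq_le_tsum_mul {C : ℝ} (hp : ∀ m, 0 ≤ p m) (hps : Summable p) (hC : 0 ≤ C)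
    (hq : ∀ m, q m ≤ C) (n : ℕ) : convSeq p q n ≤ (∑' m, p m) * C :=
  calc convSeq p q n
      ≤ ∑ m ∈ Finset.range (n + 1), p m * C :=
        Finset.sum_le_sum fun m _ => mul_le_mul_of_nonneg_left (hq (n - m)) (hp m)
    _ = (∑ m ∈ Finset.range (n + 1), p m) * C := (Finset.sum_mul ..).symm
    _ ≤ (∑' m, p m) * C :=
        mul_le_mul_of_nonneg_right (hps.sum_le_tsum _ fun m _ => hp m) hC

theorem convPow_nonneg (hp : ∀ m, 0 ≤ p m) (k n : ℕ) : 0 ≤ convPow p k n := by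
  induction k generalizing n with
  | zero => exact ite_nonneg zero_le_one le_rfl
  | succ k ih => exact convSeq_nonneg hp ih n

theorem convPow_le_tsum_pow (hp : ∀ m, 0 ≤ p m) (hps : Summable p) (k n : ℕ) :
    convPow p k n ≤ (∑' m, p m) ^ k := by
  induction k generalizing n with
  | zero => by_cases hn : n = 0 <;> simp [convPow, hn]
  | succ k ih =>
    rw [pow_succ']
    exact convSeq_le_tsum_mul hp hps (pow_nonneg (tsum_nonneg hp) k) ih n

theorem summable_convPow (hp : ∀ m, 0 ≤ p m) (hps : Summable p) (hlt : ∑' m, p m < 1) (n : ℕ) :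
    Summable fun k => convPow p k n :=
  .of_nonneg_of_le (convPow_nonneg hp · n) (convPow_le_tsum_pow hp hps · n)
    (summable_geometric_of_lt_one (tsum_nonneg hp) hlt)

theorem tsum_convPow_le (hp : ∀ m, 0 ≤ p m) (hps : Summable p) (hlt : ∑' m, p m < 1) (n : ℕ) :
    ∑' k, convPow p k n ≤ (1 - ∑' m, p m)⁻¹ :=
  hasSum_le (convPow_le_tsum_pow hp hps · n) (summable_convPow hp hps hlt n).hasSum
    (hasSum_geometric_of_lt_one (tsum_nonneg hp) hlt)

end Bounds

theorem stmt8_general {p : ℕ → ℝ} (hp : ∀ m, 0 ≤ p m) {ρ : ℝ} (hρ : 0 < ρ)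
    (hps : Summable fun m => p m * ρ ^ m) (hlt : ∑' m, p m * ρ ^ m < 1)
    {pstar : ℝ} (hpstar : 0 ≤ pstar) (n : ℕ) :
    (Summable fun k => convPow p k n) ∧ 0 ≤ pstar * ∑' k, convPow p k n ∧
      pstar * ∑' k, convPow p k n ≤ pstar / (1 - ∑' m, p m * ρ ^ m) * ρ ^ (-(n : ℝ)) := by
  have hρn : 0 < ρ ^ n := pow_pos hρ n
  have htilt : ∀ m, 0 ≤ p m * ρ ^ m := fun m => mul_nonneg (hp m) (pow_nonneg hρ.le m)
  have hsum : Summable fun k => convPow p k n := by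
    rw [← summable_mul_right_iff hρn.ne']
    simpa only [convPow_mul_pow] using summable_convPow htilt hps hlt n
  have hbound : (∑' k, convPow p k n) * ρ ^ n ≤ (1 - ∑' m, p m * ρ ^ m)⁻¹ := by
    simpa only [← tsum_mul_right, convPow_mul_pow] using tsum_convPow_le htilt hps hlt n
  refine ⟨hsum, mul_nonneg hpstar (tsum_nonneg (convPow_nonneg hp · n)), ?_⟩
  rw [Real.rpow_neg hρ.le, Real.rpow_natCast, ← div_eq_mul_inv, le_div_iff₀ hρn, mul_assoc,
    div_eq_mul_inv]
  exact mul_le_mul_of_nonneg_left hbound hpstar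

/-- If `Σ pₘ ρᵐ < 1` for some `ρ > 1`, then the Taylor coefficients
`qₙ = p⋆ Σ_k p^{*k}ₙ` of `ζ ↦ p⋆/(1 − Σ pₘ ζᵐ)` satisfy
`0 ≤ qₙ ≤ (p⋆/(1 − Σ pₘ ρᵐ)) ρ^{−n}`. -/
theorem stmt8 (p : ℕ → ℝ) (hp00 : p 0 = 0) (hpnn : ∀ m, 0 ≤ p m)
    (ρ : ℝ) (hρ : 1 < ρ) (hsummable : Summable fun m => p m * ρ ^ m)
    (hlt : ∑' m, p m * ρ ^ m < 1)
    (pstar : ℝ) (hpstar : 0 < pstar) :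
    ∀ n : ℕ, 0 ≤ pstar * ∑' k, convPow p k n ∧
      pstar * ∑' k, convPow p k n ≤ pstar / (1 - ∑' m, p m * ρ ^ m) * ρ ^ (-(n : ℝ)) :=
  fun n => (stmt8_general hpnn (one_pos.trans hρ) hsummable hlt hpstar.le n).2
end

section
/- Let (Ω, F, P) be a probability space and let d : Ω → Ω be a measurable bijection with measurable inverse d⁻¹ such that d_*P is equivalent to P. On Ω × Ω define P̃ = ((ω ↦ (ω, d(ω)))_*P) ⊓ ((ω ↦ (d⁻¹(ω), ω))_*P) (lattice infimum of finite measures), and let Π₁, Π₂ : Ω × Ω → Ω be the coordinate projections. Then: (i) Π₁_*P̃ ≤ P and Π₂_*P̃ ≤ P; (ii) the measures P − Π₁_*P̃ and P − Π₂_*P̃ (measure subtraction) both have total mass 1 − ‖P̃‖; (iii) defining P̂ = P̃ + (1 − ‖P̃‖)⁻¹ (P − Π₁_*P̃) × (P − Π₂_*P̃) when ‖P̃‖ < 1 and P̂ = P̃ when ‖P̃‖ = 1, the measure P̂ is a probability measure on Ω × Ω with Π₁_*P̂ = P and Π₂_*P̂ = P. -/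
open MeasureTheory
open scoped ENNReal

/-!
The infimum `P̃` lies below both graph measures, the first of which has first marginal `P` and the
second of which has second marginal `P`. Any measure whose marginals are at most `P` can be
completed to a coupling: its two marginal defects have the same mass, so their product, divided by
that mass, has exactly these defects as its marginals, and adding it restores both marginals to `P`.
-/

section NormalizedProduct

variable {α β : Type*} [MeasurableSpace α] [MeasurableSpace β] {μ : Measure α} {ν : Measure β}

/-- The product measure `μ × ν` divided by the mass of `μ`. For finite measures of equal mass it
is a coupling of `μ` and `ν`, used to distribute the marginal defects. At mass zero it reads
`∞ • 0 = 0`, which is again the right value. -/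
noncomputable def normalizedProd (μ : Measure α) (ν : Measure β) : Measure (α × β) :=
  (μ Set.univ)⁻¹ • μ.prod ν

lemma fst_normalizedProd [IsFiniteMeasure ν] (h : μ Set.univ = ν Set.univ) :
    (normalizedProd μ ν).fst = μ := by
  rcases eq_or_ne μ 0 with rfl | hμ
  · simp [normalizedProd]
  · have hν : ν Set.univ ≠ 0 := h ▸ Measure.measure_univ_ne_zero.mpr hμ
    rw [normalizedProd, Measure.fst, Measure.map_smul, Measure.map_fst_prod, smul_smul, h,
      ENNReal.inv_mul_cancel hν (measure_ne_top ν _), one_smul]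

lemma snd_normalizedProd [IsFiniteMeasure ν] (h : μ Set.univ = ν Set.univ) :
    (normalizedProd μ ν).snd = ν := by
  rcases eq_or_ne ν 0 with rfl | hν
  · simp [normalizedProd]
  · have hμ : μ Set.univ ≠ 0 := h ▸ Measure.measure_univ_ne_zero.mpr hν
    rw [normalizedProd, Measure.snd, Measure.map_smul, Measure.map_snd_prod, smul_smul,
      ENNReal.inv_mul_cancel hμ (h ▸ measure_ne_top ν _), one_smul]

end NormalizedProduct

section CouplingCompletion

variable {α β : Type*} [MeasurableSpace α] [MeasurableSpace β] {μ : Measure α} {ν : Measure β}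
  {ρ : Measure (α × β)}

lemma sub_fst_univ [IsFiniteMeasure μ] (h : ρ.fst ≤ μ) :
    (μ - ρ.fst) Set.univ = μ Set.univ - ρ Set.univ := by
  have : IsFiniteMeasure ρ.fst := isFiniteMeasure_of_le μ h
  rw [Measure.sub_apply .univ h, Measure.fst_univ]

lemma sub_snd_univ [IsFiniteMeasure ν] (h : ρ.snd ≤ ν) :
    (ν - ρ.snd) Set.univ = ν Set.univ - ρ Set.univ := by
  have : IsFiniteMeasure ρ.snd := isFiniteMeasure_of_le ν h
  rw [Measure.sub_apply .univ h, Measure.snd_univ]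

lemma sub_fst_univ_eq_sub_snd_univ [IsFiniteMeasure μ] [IsFiniteMeasure ν]
    (hμν : μ Set.univ = ν Set.univ) (hμ : ρ.fst ≤ μ) (hν : ρ.snd ≤ ν) :
    (μ - ρ.fst) Set.univ = (ν - ρ.snd) Set.univ := by
  rw [sub_fst_univ hμ, sub_snd_univ hν, hμν]

/-- The completion `P̂` of a measure `ρ` whose marginals are at most `μ` and `ν`, obtained by
coupling the marginal defects independently. No case distinction on the mass of `ρ` is needed,
because `normalizedProd` vanishes on zero defects. -/
noncomputable def couplingCompletion (μ : Measure α) (ν : Measure β) (ρ : Measure (α × β)) :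
    Measure (α × β) :=
  ρ + normalizedProd (μ - ρ.fst) (ν - ρ.snd)

lemma fst_couplingCompletion [IsFiniteMeasure μ] [IsFiniteMeasure ν]
    (hμν : μ Set.univ = ν Set.univ) (hμ : ρ.fst ≤ μ) (hν : ρ.snd ≤ ν) :
    (couplingCompletion μ ν ρ).fst = μ := by
  have : IsFiniteMeasure ρ.fst := isFiniteMeasure_of_le μ hμ
  rw [couplingCompletion, Measure.fst_add,
    fst_normalizedProd (sub_fst_univ_eq_sub_snd_univ hμν hμ hν), add_comm,
    Measure.sub_add_cancel_of_le hμ]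

lemma snd_couplingCompletion [IsFiniteMeasure μ] [IsFiniteMeasure ν]
    (hμν : μ Set.univ = ν Set.univ) (hμ : ρ.fst ≤ μ) (hν : ρ.snd ≤ ν) :
    (couplingCompletion μ ν ρ).snd = ν := by
  have : IsFiniteMeasure ρ.snd := isFiniteMeasure_of_le ν hν
  rw [couplingCompletion, Measure.snd_add,
    snd_normalizedProd (sub_fst_univ_eq_sub_snd_univ hμν hμ hν), add_comm,
    Measure.sub_add_cancel_of_le hν]

lemma couplingCompletion_eq_ite [IsFiniteMeasure μ] (hμ : ρ.fst ≤ μ) :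
    couplingCompletion μ ν ρ =
      if ρ Set.univ < μ Set.univ then
        ρ + (μ Set.univ - ρ Set.univ)⁻¹ • (μ - ρ.fst).prod (ν - ρ.snd)
      else ρ := by
  split_ifs with h
  · rw [couplingCompletion, normalizedProd, sub_fst_univ hμ]
  · have hdefect : μ - ρ.fst = 0 := by
      rw [← Measure.measure_univ_eq_zero, sub_fst_univ hμ, tsub_eq_zero_of_le (not_lt.mp h)]
    rw [couplingCompletion, hdefect, normalizedProd, Measure.zero_prod, smul_zero, add_zero]

end CouplingCompletion

section Graph

variable {α β : Type*} [MeasurableSpace α] [MeasurableSpace β]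

lemma fst_map_graph_inf_le (μ : Measure α) {f : α → β} (hf : AEMeasurable f μ)
    (ρ : Measure (α × β)) : ((μ.map fun a => (a, f a)) ⊓ ρ).fst ≤ μ :=
  calc ((μ.map fun a => (a, f a)) ⊓ ρ).fst ≤ (μ.map fun a => (a, f a)).fst :=
        Measure.fst_mono inf_le_left
    _ = μ := (Measure.fst_map_prodMk₀ hf).trans Measure.map_id

lemma snd_inf_map_graph_le (ν : Measure β) {g : β → α} (hg : AEMeasurable g ν)
    (ρ : Measure (α × β)) : (ρ ⊓ ν.map fun b => (g b, b)).snd ≤ ν :=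
  calc (ρ ⊓ ν.map fun b => (g b, b)).snd ≤ (ν.map fun b => (g b, b)).snd :=
        Measure.snd_mono inf_le_right
    _ = ν := (Measure.snd_map_prodMk₀ hg).trans Measure.map_id

end Graph

theorem stmt9_general {α β : Type*} [MeasurableSpace α] [MeasurableSpace β]
    {P : Measure α} [IsProbabilityMeasure P] {Q : Measure β} [IsProbabilityMeasure Q]
    {f : α → β} {g : β → α} (hf : AEMeasurable f P) (hg : AEMeasurable g Q)
    {Pt : Measure (α × β)} (hPt : Pt = (P.map fun a => (a, f a)) ⊓ (Q.map fun b => (g b, b))) :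
    (Pt.fst ≤ P ∧ Pt.snd ≤ Q) ∧
    ((P - Pt.fst) Set.univ = 1 - Pt Set.univ ∧ (Q - Pt.snd) Set.univ = 1 - Pt Set.univ) ∧
    (∀ Phat : Measure (α × β),
      Phat = (if Pt Set.univ < 1 then
          Pt + (1 - Pt Set.univ)⁻¹ • (P - Pt.fst).prod (Q - Pt.snd)
        else Pt) →
      IsProbabilityMeasure Phat ∧ Phat.fst = P ∧ Phat.snd = Q) := by
  have hfst : Pt.fst ≤ P := hPt ▸ fst_map_graph_inf_le P hf _
  have hsnd : Pt.snd ≤ Q := hPt ▸ snd_inf_map_graph_le Q hg _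
  have hPQ : P Set.univ = Q Set.univ := by rw [measure_univ, measure_univ]
  refine ⟨⟨hfst, hsnd⟩, ⟨?_, ?_⟩, fun Phat hPhat => ?_⟩
  · rw [sub_fst_univ hfst, measure_univ]
  · rw [sub_snd_univ hsnd, measure_univ]
  · have hcompletion : Phat = couplingCompletion P Q Pt := by
      rw [hPhat, couplingCompletion_eq_ite hfst, measure_univ (μ := P)]
    have hPhat_fst : Phat.fst = P := hcompletion ▸ fst_couplingCompletion hPQ hfst hsnd
    have hPhat_snd : Phat.snd = Q := hcompletion ▸ snd_couplingCompletion hPQ hfst hsnd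
    exact ⟨⟨by rw [← Measure.fst_univ, hPhat_fst, measure_univ]⟩, hPhat_fst, hPhat_snd⟩

/-- Properties of the sub-coupling measure `P̃` built from a measurable
bijection `d` with `d_*P ∼ P`: its marginals are below `P` with equal defects of mass
`1 − ‖P̃‖`, and the completed measure `P̂` is a coupling of `P` with itself. -/
theorem stmt9 {Ω : Type*} [MeasurableSpace Ω] (P : Measure Ω) [IsProbabilityMeasure P]
    (d d' : Ω → Ω) (hd : Measurable d) (hd' : Measurable d')
    (hdd' : ∀ ω, d' (d ω) = ω) (hd'd : ∀ ω, d (d' ω) = ω)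
    (habs1 : P.map d ≪ P) (habs2 : P ≪ P.map d) :
    ∀ Pt : Measure (Ω × Ω),
      Pt = (P.map fun ω => (ω, d ω)) ⊓ (P.map fun ω => (d' ω, ω)) →
      (Pt.map Prod.fst ≤ P ∧ Pt.map Prod.snd ≤ P) ∧
      ((P - Pt.map Prod.fst) Set.univ = 1 - Pt Set.univ ∧
        (P - Pt.map Prod.snd) Set.univ = 1 - Pt Set.univ) ∧
      (∀ Phat : Measure (Ω × Ω),
        Phat = (if Pt Set.univ < 1 then
            Pt + (1 - Pt Set.univ)⁻¹ • (P - Pt.map Prod.fst).prod (P - Pt.map Prod.snd)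
          else Pt) →
        IsProbabilityMeasure Phat ∧ Phat.map Prod.fst = P ∧ Phat.map Prod.snd = P) :=
  fun _ hPt => stmt9_general hd.aemeasurable hd'.aemeasurable hPt
end

section
/- Let μ be a σ-finite measure on a measurable space X and let ν be the measure with density D with respect to μ, for a measurable D : X → [0,∞). Then the lattice infimum μ ⊓ ν is the measure with density min(1, D) with respect to μ; in particular its total mass is ‖μ ⊓ ν‖ = ∫_X min(1, D(x)) μ(dx). -/
open MeasureTheory
open scoped ENNReal

/-! On a Hahn decomposition `s ∪ sᶜ` for two measures, with `μ ≤ ν` on `s` and `ν ≤ μ` on `sᶜ`, the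
lattice infimum is the measure that equals `μ` on `s` and `ν` on `sᶜ`. For the measures with
densities `f` and `g`, the set `{f ≤ g}` is a Hahn decomposition, and picking the smaller measure
on each piece picks the smaller density. As `μ` itself has density `1`, the infimum of `μ` and
`D·μ` has density `min(1, D)`. -/

section Hahn

variable {X : Type*} [MeasurableSpace X] {μ ν : Measure X} {s : Set X}

theorem inf_eq_restrict_add_restrict_compl (h : IsHahnDecomposition μ ν s) :
    μ ⊓ ν = μ.restrict s + ν.restrict sᶜ := by
  have hs : MeasurableSet s := h.measurableSet
  refine le_antisymm ?_ (le_inf ?_ ?_)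
  · calc μ ⊓ ν = (μ ⊓ ν).restrict s + (μ ⊓ ν).restrict sᶜ :=
          (Measure.restrict_add_restrict_compl hs).symm
      _ ≤ μ.restrict s + ν.restrict sᶜ :=
          add_le_add (Measure.restrict_mono le_rfl inf_le_left)
            (Measure.restrict_mono le_rfl inf_le_right)
  · calc μ.restrict s + ν.restrict sᶜ ≤ μ.restrict s + μ.restrict sᶜ :=
          add_le_add_right h.ge_on_compl _
      _ = μ := Measure.restrict_add_restrict_compl hs
  · calc μ.restrict s + ν.restrict sᶜ ≤ ν.restrict s + ν.restrict sᶜ :=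
          add_le_add_left h.le_on _
      _ = ν := Measure.restrict_add_restrict_compl hs

end Hahn

section Density

variable {X : Type*} [MeasurableSpace X] {f g : X → ℝ≥0∞}

theorem isHahnDecomposition_withDensity (μ : Measure X) (hf : Measurable f) (hg : Measurable g) :
    IsHahnDecomposition (μ.withDensity f) (μ.withDensity g) {x | f x ≤ g x} where
  measurableSet := measurableSet_le hf hg
  le_on := by
    have hs := measurableSet_le hf hg
    rw [restrict_withDensity hs, restrict_withDensity hs]
    exact withDensity_mono (ae_restrict_of_forall_mem hs fun _ hx => hx)
  ge_on_compl := by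
    have hs := (measurableSet_le hf hg).compl
    rw [restrict_withDensity hs, restrict_withDensity hs]
    exact withDensity_mono (ae_restrict_of_forall_mem hs fun _ hx => le_of_not_ge hx)

theorem withDensity_inf (μ : Measure X) (hf : Measurable f) (hg : Measurable g) :
    μ.withDensity f ⊓ μ.withDensity g = μ.withDensity (f ⊓ g) := by
  have hs : MeasurableSet {x | f x ≤ g x} := measurableSet_le hf hg
  rw [inf_eq_restrict_add_restrict_compl (isHahnDecomposition_withDensity μ hf hg),
    ← Measure.restrict_add_restrict_compl (μ := μ.withDensity (f ⊓ g)) hs]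
  simp only [restrict_withDensity hs, restrict_withDensity hs.compl]
  congr 1
  · exact withDensity_congr_ae
      (ae_restrict_of_forall_mem hs fun _ hx => (inf_eq_left.mpr hx).symm)
  · exact withDensity_congr_ae (ae_restrict_of_forall_mem hs.compl
      fun x (hx : ¬f x ≤ g x) => (inf_eq_right.mpr (le_of_not_ge hx)).symm)

theorem withDensity_inf₀ {μ : Measure X} (hf : AEMeasurable f μ) (hg : AEMeasurable g μ) :
    μ.withDensity f ⊓ μ.withDensity g = μ.withDensity (f ⊓ g) := by
  rw [withDensity_congr_ae hf.ae_eq_mk, withDensity_congr_ae hg.ae_eq_mk,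
    withDensity_congr_ae (hf.ae_eq_mk.inf hg.ae_eq_mk)]
  exact withDensity_inf μ hf.measurable_mk hg.measurable_mk

end Density

theorem stmt11_general {X : Type*} [MeasurableSpace X] {μ : Measure X} {D : X → ℝ≥0∞}
    (hD : AEMeasurable D μ) :
    μ ⊓ μ.withDensity D = μ.withDensity (fun x => min 1 (D x)) ∧
    (μ ⊓ μ.withDensity D) Set.univ = ∫⁻ x, min 1 (D x) ∂μ := by
  have density_inf : μ ⊓ μ.withDensity D = μ.withDensity (fun x => min 1 (D x)) := by
    calc μ ⊓ μ.withDensity D = μ.withDensity 1 ⊓ μ.withDensity D := by rw [withDensity_one]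
      _ = μ.withDensity (1 ⊓ D) := withDensity_inf₀ aemeasurable_one hD
  refine ⟨density_inf, ?_⟩
  rw [density_inf, withDensity_apply _ MeasurableSet.univ, setLIntegral_univ]

/-- For a σ-finite measure `μ` and `ν = D·μ` with `D` finite-valued and
measurable, the lattice infimum `μ ⊓ ν` has density `min(1, D)` with respect to `μ`;
in particular its total mass is `∫ min(1, D) dμ`. -/
theorem stmt11 {X : Type*} [MeasurableSpace X] (μ : Measure X) [SigmaFinite μ]
    (D : X → ℝ≥0∞) (hD : Measurable D) (hDfin : ∀ x, D x < ⊤) :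
    μ ⊓ μ.withDensity D = μ.withDensity (fun x => min 1 (D x)) ∧
    (μ ⊓ μ.withDensity D) Set.univ = ∫⁻ x, min 1 (D x) ∂μ :=
  stmt11_general hD.aemeasurable
end

section
/- Let P be a Markov transition kernel on a measurable space X and let V : X → [0,∞] be measurable with constants a ∈ (0,1), b > 0 such that ∫_X V(y) P(x,dy) ≤ a V(x) + b for every x with V(x) < ∞, and P(x, {y : V(y) < ∞}) = 1 for every x ∈ X. Then every invariant probability measure μ⋆ of P (i.e. μ⋆(A) = ∫_X P(x,A) μ⋆(dx) for all measurable A) satisfies ∫_X V(x) μ⋆(dx) ≤ b/(1−a). -/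
/-!
Write `P` for the kernel. Integrating the truncation `min V n` against the invariant measure gives
`∫ min V n = ∫ P (min V n) ≤ ∫ min (P V) n ≤ ∫ min (a V + b) n`. Where `V > n` the first integrand
equals `n` and the last is at most `n`, so the finite contribution `n * μ {V > n}` cancels, leaving
`∫_{V ≤ n} V ≤ a ∫_{V ≤ n} V + b`. As `∫_{V ≤ n} V` is finite, this can be solved to give
`∫_{V ≤ n} V ≤ b / (1 - a)`, and monotone convergence concludes.
-/

open MeasureTheory ProbabilityTheory
open scoped ENNReal

theorem le_div_one_sub_of_le_mul_add {a b r : ℝ≥0∞} (ha : a < 1) (hr : r ≠ ⊤)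
    (h : r ≤ a * r + b) : r ≤ b / (1 - a) := by
  rw [ENNReal.le_div_iff_mul_le (.inl (tsub_pos_of_lt ha).ne') (.inl (by finiteness)),
    mul_comm, ENNReal.sub_mul fun _ _ ↦ hr, one_mul]
  exact tsub_le_iff_left.2 h

section Truncation

variable {X : Type*} [MeasurableSpace X] {μ : Measure X} {f g : X → ℝ≥0∞} {c : ℝ≥0∞}

theorem setLIntegral_setOf_le_const_le (f : X → ℝ≥0∞) (c : ℝ≥0∞) :
    ∫⁻ x in {x | f x ≤ c}, f x ∂μ ≤ c * μ {x | f x ≤ c} :=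
  (setLIntegral_mono measurable_const fun _ hx ↦ hx).trans_eq (setLIntegral_const _ c)

theorem lintegral_min_const (hf : Measurable f) (c : ℝ≥0∞) :
    ∫⁻ x, min (f x) c ∂μ = ∫⁻ x in {x | f x ≤ c}, f x ∂μ + c * μ {x | f x ≤ c}ᶜ := by
  have hs : MeasurableSet {x | f x ≤ c} := measurableSet_le hf measurable_const
  rw [← lintegral_add_compl _ hs, ← setLIntegral_const]
  congr 1
  · exact setLIntegral_congr_fun hs fun x hx ↦ min_eq_left hx
  · exact setLIntegral_congr_fun hs.compl fun x hx ↦ min_eq_right (le_of_not_ge hx)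

theorem lintegral_min_const_le {s : Set X} (hs : MeasurableSet s) (g : X → ℝ≥0∞) (c : ℝ≥0∞) :
    ∫⁻ x, min (g x) c ∂μ ≤ ∫⁻ x in s, g x ∂μ + c * μ sᶜ := by
  rw [← lintegral_add_compl _ hs, ← setLIntegral_const]
  exact add_le_add (lintegral_mono fun _ ↦ min_le_left _ _)
    (lintegral_mono fun _ ↦ min_le_right _ _)

theorem setLIntegral_le_of_lintegral_min_le (hf : Measurable f) (hc : c * μ {x | f x ≤ c}ᶜ ≠ ⊤)
    (h : ∫⁻ x, min (f x) c ∂μ ≤ ∫⁻ x, min (g x) c ∂μ) :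
    ∫⁻ x in {x | f x ≤ c}, f x ∂μ ≤ ∫⁻ x in {x | f x ≤ c}, g x ∂μ := by
  have hs : MeasurableSet {x | f x ≤ c} := measurableSet_le hf measurable_const
  rw [← ENNReal.add_le_add_iff_right hc, ← lintegral_min_const hf]
  exact h.trans (lintegral_min_const_le hs g c)

theorem lintegral_eq_iSup_setLIntegral_setOf_le_natCast (hf : ∀ᵐ x ∂μ, f x < ⊤) (g : X → ℝ≥0∞) :
    ∫⁻ x, g x ∂μ = ⨆ n : ℕ, ∫⁻ x in {x | f x ≤ n}, g x ∂μ := by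
  have hcover : ∀ᵐ x ∂μ, x ∈ ⋃ n : ℕ, {x | f x ≤ n} := by
    filter_upwards [hf] with x hx
    obtain ⟨n, hn⟩ := ENNReal.exists_nat_gt hx.ne
    exact Set.mem_iUnion.2 ⟨n, hn.le⟩
  have hmono : Monotone fun n : ℕ ↦ {x | f x ≤ n} :=
    fun _ _ hmn _ hx ↦ (show f _ ≤ _ from hx).trans (Nat.cast_le.2 hmn)
  rw [← setLIntegral_iUnion_of_directed _ hmono.directed_le,
    Measure.restrict_eq_self_of_ae_mem hcover]

end Truncation

section Invariant

variable {X : Type*} [MeasurableSpace X] {κ : Kernel X X} {μ : Measure X}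

theorem kernel_invariant_iff :
    κ.Invariant μ ↔ ∀ A, MeasurableSet A → μ A = ∫⁻ x, κ x A ∂μ := by
  rw [Kernel.Invariant, eq_comm, Measure.ext_iff]
  exact forall₂_congr fun A hA ↦ by rw [Measure.bind_apply hA κ.aemeasurable]

theorem ae_of_invariant_of_ae_ae (hμ : κ.Invariant μ) {p : X → Prop}
    (hp : MeasurableSet {x | p x}) (h : ∀ᵐ x ∂μ, ∀ᵐ y ∂κ x, p y) : ∀ᵐ x ∂μ, p x :=
  hμ.def ▸ Measure.ae_comp_of_ae_ae hp h

theorem lintegral_le_lintegral_lintegral_of_invariant (hμ : κ.Invariant μ) (f : X → ℝ≥0∞) :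
    ∫⁻ x, f x ∂μ ≤ ∫⁻ x, ∫⁻ y, f y ∂κ x ∂μ := by
  simpa only [hμ.def] using Measure.lintegral_bind_le f μ κ

theorem lintegral_min_const_le_of_invariant [IsZeroOrMarkovKernel κ] (hμ : κ.Invariant μ)
    {f g : X → ℝ≥0∞} (hfg : ∀ᵐ x ∂μ, ∫⁻ y, f y ∂κ x ≤ g x) (c : ℝ≥0∞) :
    ∫⁻ x, min (f x) c ∂μ ≤ ∫⁻ x, min (g x) c ∂μ := by
  refine (lintegral_le_lintegral_lintegral_of_invariant hμ _).trans (lintegral_mono_ae ?_)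
  filter_upwards [hfg] with x hx
  refine le_min ((lintegral_mono fun y ↦ min_le_left _ _).trans hx) ?_
  calc ∫⁻ y, min (f y) c ∂κ x ≤ ∫⁻ _, c ∂κ x := lintegral_mono fun y ↦ min_le_right _ _
    _ = c * κ x Set.univ := lintegral_const c
    _ ≤ c := mul_le_of_le_one_right' prob_le_one

theorem setLIntegral_le_div_one_sub_of_invariant [IsZeroOrMarkovKernel κ] [IsFiniteMeasure μ]
    (hμ : κ.Invariant μ) {V : X → ℝ≥0∞} (hV : Measurable V) {a b c : ℝ≥0∞} (ha : a < 1)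
    (hdrift : ∀ᵐ x ∂μ, ∫⁻ y, V y ∂κ x ≤ a * V x + b) (hc : c ≠ ⊤) :
    ∫⁻ x in {x | V x ≤ c}, V x ∂μ ≤ b * μ Set.univ / (1 - a) := by
  have hlevel : ∫⁻ x in {x | V x ≤ c}, V x ∂μ ≠ ⊤ :=
    ne_top_of_le_ne_top (by finiteness) (setLIntegral_setOf_le_const_le V c)
  refine le_div_one_sub_of_le_mul_add ha hlevel ?_
  calc ∫⁻ x in {x | V x ≤ c}, V x ∂μ
      ≤ ∫⁻ x in {x | V x ≤ c}, (a * V x + b) ∂μ :=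
        setLIntegral_le_of_lintegral_min_le hV (by finiteness)
          (lintegral_min_const_le_of_invariant hμ hdrift c)
    _ = a * ∫⁻ x in {x | V x ≤ c}, V x ∂μ + b * μ {x | V x ≤ c} := by
        rw [lintegral_add_right _ measurable_const, lintegral_const_mul _ hV, setLIntegral_const]
    _ ≤ a * ∫⁻ x in {x | V x ≤ c}, V x ∂μ + b * μ Set.univ := by
        gcongr
        exact Set.subset_univ _

theorem stmt12_general [IsZeroOrMarkovKernel κ] [IsFiniteMeasure μ] (hμ : κ.Invariant μ)
    {V : X → ℝ≥0∞} (hV : Measurable V) {a b : ℝ≥0∞} (ha : a < 1)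
    (hLyap : ∀ᵐ x ∂μ, V x < ⊤ → ∫⁻ y, V y ∂κ x ≤ a * V x + b)
    (hfin : ∀ᵐ x ∂μ, ∀ᵐ y ∂κ x, V y < ⊤) :
    ∫⁻ x, V x ∂μ ≤ b * μ Set.univ / (1 - a) := by
  have hVfin : ∀ᵐ x ∂μ, V x < ⊤ :=
    ae_of_invariant_of_ae_ae hμ (measurableSet_lt hV measurable_const) hfin
  have hdrift : ∀ᵐ x ∂μ, ∫⁻ y, V y ∂κ x ≤ a * V x + b := by
    filter_upwards [hLyap, hVfin] with x hx hVx using hx hVx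
  rw [lintegral_eq_iSup_setLIntegral_setOf_le_natCast hVfin]
  exact iSup_le fun n ↦
    setLIntegral_le_div_one_sub_of_invariant hμ hV ha hdrift (ENNReal.natCast_ne_top n)

end Invariant

/-- If a Markov kernel admits a Lyapunov function `V` with
`∫ V(y) P(x,dy) ≤ a V(x) + b` (`a ∈ (0,1)`, `b > 0` finite) wherever `V(x) < ∞`, and
`P(x, {V < ∞}) = 1` for all `x`, then every invariant probability measure `μ⋆` satisfies
`∫ V dμ⋆ ≤ b/(1−a)`. -/
theorem stmt12 {X : Type*} [MeasurableSpace X]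
    (κ : Kernel X X) [IsMarkovKernel κ]
    (V : X → ℝ≥0∞) (hV : Measurable V)
    (a b : ℝ≥0∞) (ha0 : 0 < a) (ha1 : a < 1) (hb0 : 0 < b) (hbfin : b < ⊤)
    (hLyap : ∀ x, V x < ⊤ → ∫⁻ y, V y ∂(κ x) ≤ a * V x + b)
    (hfin : ∀ x, κ x {y | V y < ⊤} = 1)
    (μstar : Measure X) [IsProbabilityMeasure μstar]
    (hinv : ∀ A : Set X, MeasurableSet A → μstar A = ∫⁻ x, κ x A ∂μstar) :
    ∫⁻ x, V x ∂μstar ≤ b / (1 - a) := by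
  have hVfin (x : X) : ∀ᵐ y ∂κ x, V y < ⊤ :=
    (mem_ae_iff_prob_eq_one (measurableSet_lt hV measurable_const)).2 (hfin x)
  simpa using
    stmt12_general (kernel_invariant_iff.2 hinv) hV ha1 (ae_of_all _ hLyap) (ae_of_all _ hVfin)
end

section
/- Let x₁, x₂, ρ₁, ρ₂ : [0,∞) → ℝ be continuously differentiable, set yᵢ = xᵢ + ρᵢ and ζ = ρ₁ + 3ρ₂, and assume that for all t ≥ 0: ρ₂′(t) = 2ρ₂(t) + ρ₁(t) − ρ₂(t)(x₂(t)² + x₂(t)y₂(t) + y₂(t)²) and ζ′(t) = −2ζ(t). Then there exists a universal constant C > 0 (independent of the functions) such that |ρ₁(t)| + |ρ₂(t)| ≤ C e^{−t} (|ρ₁(0)| + |ρ₂(0)|) for all t ≥ 0. (This is the exponential contraction of the asymptotic coupling for the toy model dx₁ = (2x₁+x₂−x₁³)dt + dω, dx₂ = (2x₂+x₁−x₂³)dt, with the binding drift G chosen so that ζ satisfies ζ′ = −2ζ.) -/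
/-!
With `ζ = ρ₁ + 3 ρ₂` and `q = x₂² + x₂ y₂ + y₂² ≥ 0`, the equation for `ρ₂` reads
`ρ₂' = ζ - (1 + q) ρ₂`, so both `ζ` and `ρ₂` solve equations `u' = f - k u` whose damping `k` is
bounded below, by `2` and by `1`. The norm of such a solution stays below every nonnegative
supersolution `B' ≥ ‖f‖ - k B`. This first gives `‖ζ‖ ≤ ‖ζ(0)‖ e^{-2t}`; this forcing decays
faster than the damping rate `1` of `ρ₂`, so `ρ₂`, and with it `ρ₁ = ζ - 3 ρ₂`, decays
like `e^{-t}`.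
-/

open Set

section DampedEquation

variable {E : Type*} [NormedAddCommGroup E] [InnerProductSpace ℝ E]
  {u f : ℝ → E} {k B B' : ℝ → ℝ} {a c : ℝ}

lemma norm_le_of_hasDerivWithinAt_sub_smul_of_lt
    (hu : ∀ t ∈ Ici a, HasDerivWithinAt u (f t - k t • u t) (Ici a) t)
    (hB : ∀ t ∈ Ici a, HasDerivWithinAt B (B' t) (Ici a) t)
    (hpos : ∀ t ∈ Ici a, 0 < B t) (hlt : ∀ t ∈ Ici a, ‖f t‖ < B' t + k t * B t)
    (ha : ‖u a‖ ≤ B a) {t : ℝ} (ht : t ∈ Ici a) : ‖u t‖ ≤ B t := by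
  have hu_sq : ∀ s ∈ Ici a, HasDerivWithinAt (fun s ↦ ‖u s‖ ^ 2)
      (2 * inner ℝ (u s) (f s - k s • u s)) (Ici a) s := fun s hs ↦ (hu s hs).norm_sq
  have hB_sq : ∀ s ∈ Ici a, HasDerivWithinAt (fun s ↦ B s ^ 2) (2 * (B s * B' s)) (Ici a) s :=
    fun s hs ↦ ((hB s hs).fun_pow 2).congr_deriv (by ring)
  have h_contact : ∀ s ∈ Ici a, ‖u s‖ ^ 2 = B s ^ 2 →
      2 * inner ℝ (u s) (f s - k s • u s) < 2 * (B s * B' s) := by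
    intro s hs h_eq
    have h_norm : ‖u s‖ = B s := by
      rwa [sq_eq_sq₀ (norm_nonneg _) (hpos s hs).le] at h_eq
    have h_inner : inner ℝ (u s) (f s - k s • u s) < B s * B' s := calc
      inner ℝ (u s) (f s - k s • u s) = inner ℝ (u s) (f s) - k s * ‖u s‖ ^ 2 := by
        rw [inner_sub_right, real_inner_smul_right, real_inner_self_eq_norm_sq]
      _ ≤ ‖u s‖ * ‖f s‖ - k s * ‖u s‖ ^ 2 := by gcongr; exact real_inner_le_norm _ _
      _ = B s * (‖f s‖ - k s * B s) := by rw [h_norm]; ring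
      _ < B s * B' s := mul_lt_mul_of_pos_left (sub_lt_iff_lt_add.2 (hlt s hs)) (hpos s hs)
    linarith
  have h_sq : ‖u t‖ ^ 2 ≤ B t ^ 2 := image_le_of_deriv_right_lt_deriv_boundary'
    (fun s hs ↦ (hu_sq s hs.1).continuousWithinAt.mono Icc_subset_Ici_self)
    (fun s hs ↦ (hu_sq s hs.1).mono (Ici_subset_Ici.2 hs.1))
    (pow_le_pow_left₀ (norm_nonneg _) ha 2)
    (fun s hs ↦ (hB_sq s hs.1).continuousWithinAt.mono Icc_subset_Ici_self)
    (fun s hs ↦ (hB_sq s hs.1).mono (Ici_subset_Ici.2 hs.1))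
    (fun s hs ↦ h_contact s hs.1) (right_mem_Icc.2 ht)
  exact le_of_sq_le_sq h_sq (hpos t ht).le

lemma norm_le_of_hasDerivWithinAt_sub_smul (hk : ∀ t ∈ Ici a, c ≤ k t)
    (hu : ∀ t ∈ Ici a, HasDerivWithinAt u (f t - k t • u t) (Ici a) t)
    (hB : ∀ t ∈ Ici a, HasDerivWithinAt B (B' t) (Ici a) t)
    (hnonneg : ∀ t ∈ Ici a, 0 ≤ B t) (hle : ∀ t ∈ Ici a, ‖f t‖ ≤ B' t + k t * B t)
    (ha : ‖u a‖ ≤ B a) {t : ℝ} (ht : t ∈ Ici a) : ‖u t‖ ≤ B t := by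
  -- `w' + k w > 0`, so adding `ε w` turns `B` into a strict supersolution.
  set w : ℝ → ℝ := fun s ↦ Real.exp ((1 - c) * s) with hw
  have hw_pos : ∀ s, 0 < w s := fun s ↦ Real.exp_pos _
  have hw_deriv : ∀ s, HasDerivAt w ((1 - c) * w s) s := fun s ↦
    (((hasDerivAt_id s).const_mul (1 - c)).exp).congr_deriv (by simp only [hw, id]; ring)
  have h_perturbed : ∀ ε > 0, ‖u t‖ ≤ B t + ε * w t := by
    intro ε hε
    refine norm_le_of_hasDerivWithinAt_sub_smul_of_lt (B := fun s ↦ B s + ε * w s) hu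
      (fun s hs ↦ (hB s hs).add ((hw_deriv s).hasDerivWithinAt.const_mul ε))
      (fun s hs ↦ add_pos_of_nonneg_of_pos (hnonneg s hs) (mul_pos hε (hw_pos s)))
      (fun s hs ↦ ?_) (ha.trans (le_add_of_nonneg_right (mul_pos hε (hw_pos a)).le)) ht
    have h_gap : 0 < (1 - c + k s) * (ε * w s) :=
      mul_pos (by linarith [hk s hs]) (mul_pos hε (hw_pos s))
    linarith [hle s hs]
  refine le_of_forall_pos_le_add fun δ hδ ↦ ?_
  simpa only [div_mul_cancel₀ _ (hw_pos t).ne'] using h_perturbed (δ / w t) (div_pos hδ (hw_pos t))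

end DampedEquation

section ExponentialDecay

variable {E : Type*} [NormedAddCommGroup E] [InnerProductSpace ℝ E]
  {u f : ℝ → E} {k : ℝ → ℝ} {c d M : ℝ}

lemma hasDerivAt_const_mul_exp_neg_mul (A c t : ℝ) :
    HasDerivAt (fun s ↦ A * Real.exp (-c * s)) (-c * (A * Real.exp (-c * t))) t :=
  (((hasDerivAt_id t).const_mul (-c)).exp.const_mul A).congr_deriv (by simp only [id]; ring)

lemma norm_le_mul_exp_of_hasDerivWithinAt_sub_smul (hcd : c < d) (hk : ∀ t ∈ Ici 0, c ≤ k t)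
    (hf : ∀ t ∈ Ici 0, ‖f t‖ ≤ M * Real.exp (-d * t))
    (hu : ∀ t ∈ Ici 0, HasDerivWithinAt u (f t - k t • u t) (Ici 0) t) {t : ℝ} (ht : t ∈ Ici 0) :
    ‖u t‖ ≤ (‖u 0‖ + M / (d - c)) * Real.exp (-c * t) := by
  have hM : 0 ≤ M := by simpa using (norm_nonneg _).trans (hf 0 self_mem_Ici)
  have hN : 0 ≤ M / (d - c) := div_nonneg hM (sub_nonneg.2 hcd.le)
  -- The solution of `B' = M e^{-dt} - c B` with initial value `‖u 0‖`.
  set B : ℝ → ℝ := fun s ↦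
    (‖u 0‖ + M / (d - c)) * Real.exp (-c * s) - M / (d - c) * Real.exp (-d * s) with hB
  have hB_nonneg : ∀ s ∈ Ici (0 : ℝ), 0 ≤ B s := by
    intro s hs
    have h_exp : Real.exp (-d * s) ≤ Real.exp (-c * s) :=
      Real.exp_le_exp.2 (mul_le_mul_of_nonneg_right (neg_le_neg hcd.le) hs)
    exact sub_nonneg.2 (mul_le_mul (le_add_of_nonneg_left (norm_nonneg _)) h_exp
      (Real.exp_pos _).le (add_nonneg (norm_nonneg _) hN))
  have h_norm : ‖u t‖ ≤ B t := by
    refine norm_le_of_hasDerivWithinAt_sub_smul (B := B) hk hu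
      (fun s _ ↦ ((hasDerivAt_const_mul_exp_neg_mul _ c s).sub
        (hasDerivAt_const_mul_exp_neg_mul _ d s)).hasDerivWithinAt)
      hB_nonneg (fun s hs ↦ (hf s hs).trans ?_) (by simp [hB]) ht
    have h_damping : c * B s ≤ k s * B s := mul_le_mul_of_nonneg_right (hk s hs) (hB_nonneg s hs)
    have h_forcing : M * Real.exp (-d * s) = (d - c) * (M / (d - c) * Real.exp (-d * s)) := by
      rw [← mul_assoc, mul_div_cancel₀ _ (sub_pos.2 hcd).ne']
    simp only [hB] at h_damping ⊢
    linarith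
  exact h_norm.trans (sub_le_self _ (mul_nonneg hN (Real.exp_pos _).le))

lemma norm_le_mul_exp_of_hasDerivWithinAt_neg_smul (hk : ∀ t ∈ Ici 0, c ≤ k t)
    (hu : ∀ t ∈ Ici 0, HasDerivWithinAt u (-k t • u t) (Ici 0) t) {t : ℝ} (ht : t ∈ Ici 0) :
    ‖u t‖ ≤ ‖u 0‖ * Real.exp (-c * t) := by
  simpa using norm_le_mul_exp_of_hasDerivWithinAt_sub_smul (f := 0) (M := 0) (lt_add_one c) hk
    (by simp) (fun s hs ↦ (hu s hs).congr_deriv (by simp)) ht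

end ExponentialDecay

lemma sq_add_mul_add_sq_nonneg (a b : ℝ) : 0 ≤ a ^ 2 + a * b + b ^ 2 := by
  nlinarith [sq_nonneg (a + b), sq_nonneg a, sq_nonneg b]

theorem stmt14_general {E : Type*} [NormedAddCommGroup E] [InnerProductSpace ℝ E]
    {ρ₁ ρ₂ : ℝ → E} {q : ℝ → ℝ} (hq : ∀ t ∈ Ici 0, 0 ≤ q t)
    (hρ₂ : ∀ t ∈ Ici 0,
      HasDerivWithinAt ρ₂ ((2 : ℝ) • ρ₂ t + ρ₁ t - q t • ρ₂ t) (Ici 0) t)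
    (hζ : ∀ t ∈ Ici 0, HasDerivWithinAt (fun s ↦ ρ₁ s + (3 : ℝ) • ρ₂ s)
      ((-2 : ℝ) • (ρ₁ t + (3 : ℝ) • ρ₂ t)) (Ici 0) t) {t : ℝ} (ht : t ∈ Ici 0) :
    ‖ρ₁ t‖ + ‖ρ₂ t‖ ≤ 19 * Real.exp (-t) * (‖ρ₁ 0‖ + ‖ρ₂ 0‖) := by
  set ζ : ℝ → E := fun s ↦ ρ₁ s + (3 : ℝ) • ρ₂ s with hζ_def
  have hζ_decay : ∀ s ∈ Ici (0 : ℝ), ‖ζ s‖ ≤ ‖ζ 0‖ * Real.exp (-2 * s) := fun s hs ↦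
    norm_le_mul_exp_of_hasDerivWithinAt_neg_smul (fun _ _ ↦ le_rfl) hζ hs
  have hρ₂_damped : ∀ s ∈ Ici (0 : ℝ),
      HasDerivWithinAt ρ₂ (ζ s - (1 + q s) • ρ₂ s) (Ici 0) s := fun s hs ↦
    (hρ₂ s hs).congr_deriv (by simp only [hζ_def]; module)
  have hρ₂_decay : ‖ρ₂ t‖ ≤ (‖ρ₂ 0‖ + ‖ζ 0‖) * Real.exp (-t) := by
    have h := norm_le_mul_exp_of_hasDerivWithinAt_sub_smul (c := 1) (by norm_num)
      (fun s hs ↦ le_add_of_nonneg_right (hq s hs)) hζ_decay hρ₂_damped ht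
    rwa [show (2 : ℝ) - 1 = 1 by norm_num, div_one, neg_one_mul] at h
  have hζ_le : ‖ζ t‖ ≤ ‖ζ 0‖ * Real.exp (-t) :=
    (hζ_decay t ht).trans (by gcongr; linarith [mem_Ici.1 ht])
  have hρ₁_le : ‖ρ₁ t‖ ≤ ‖ζ t‖ + 3 * ‖ρ₂ t‖ := by
    simpa [hζ_def, norm_smul] using norm_sub_le (ζ t) ((3 : ℝ) • ρ₂ t)
  have hζ_zero : ‖ζ 0‖ ≤ ‖ρ₁ 0‖ + 3 * ‖ρ₂ 0‖ := by
    simpa [hζ_def, norm_smul] using norm_add_le (ρ₁ 0) ((3 : ℝ) • ρ₂ 0)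
  calc ‖ρ₁ t‖ + ‖ρ₂ t‖ ≤ ‖ζ t‖ + 4 * ‖ρ₂ t‖ := by linarith
    _ ≤ (5 * ‖ζ 0‖ + 4 * ‖ρ₂ 0‖) * Real.exp (-t) := by linarith
    _ ≤ 19 * (‖ρ₁ 0‖ + ‖ρ₂ 0‖) * Real.exp (-t) := by
      gcongr
      linarith [norm_nonneg (ρ₁ 0)]
    _ = 19 * Real.exp (-t) * (‖ρ₁ 0‖ + ‖ρ₂ 0‖) := by ring

/-- Exponential contraction for the asymptotic coupling of the toy model:
if `ρ₂` satisfies its coupled ODE and the binding drift forces `ζ = ρ₁ + 3ρ₂` to satisfy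
`ζ' = −2ζ` on `[0,∞)`, then `|ρ₁(t)| + |ρ₂(t)| ≤ C e^{−t} (|ρ₁(0)| + |ρ₂(0)|)` for a
universal constant `C`. -/
theorem stmt14 :
    ∃ C : ℝ, 0 < C ∧
      ∀ x₁ x₂ ρ₁ ρ₂ : ℝ → ℝ,
        ContDiffOn ℝ 1 x₁ (Ici 0) → ContDiffOn ℝ 1 x₂ (Ici 0) →
        ContDiffOn ℝ 1 ρ₁ (Ici 0) → ContDiffOn ℝ 1 ρ₂ (Ici 0) →
        (∀ t ∈ Ici (0 : ℝ), HasDerivWithinAt ρ₂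
          (2 * ρ₂ t + ρ₁ t -
            ρ₂ t * ((x₂ t) ^ 2 + x₂ t * (x₂ t + ρ₂ t) + (x₂ t + ρ₂ t) ^ 2)) (Ici 0) t) →
        (∀ t ∈ Ici (0 : ℝ), HasDerivWithinAt (fun s => ρ₁ s + 3 * ρ₂ s)
          (-2 * (ρ₁ t + 3 * ρ₂ t)) (Ici 0) t) →
        ∀ t ∈ Ici (0 : ℝ), |ρ₁ t| + |ρ₂ t| ≤ C * Real.exp (-t) * (|ρ₁ 0| + |ρ₂ 0|) :=
  ⟨19, by norm_num, fun _ x₂ _ ρ₂ _ _ _ _ hρ₂ hζ _ ht ↦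
    stmt14_general (fun t _ ↦ sq_add_mul_add_sq_nonneg (x₂ t) (x₂ t + ρ₂ t))
      (fun t ht ↦ (hρ₂ t ht).congr_deriv (by simp only [smul_eq_mul]; ring)) hζ ht⟩
end

section
/- Let c₁ > 0, K ≥ 0 and T > 0, and let f : [0,T] → [0,∞) be continuous on [0,T] and differentiable on (0,T) with f′(t) ≤ −c₁ f(t)³ + K for all t ∈ (0,T). Then f(T) ≤ (2K/c₁)^{1/3} + (c₁ T)^{−1/2}. In particular the bound on f(T) is independent of the initial value f(0). -/
open Set

/-!
Let `y σ = ((p - 1) σ) ^ (-1 / (p - 1))`, the solution of `y' = -y ^ p` that blows up at `0`, and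
let `a = (K / c) ^ (1 / p)`, the equilibrium of `-c x ^ p + K`. Superadditivity of `x ↦ x ^ p` makes
`t ↦ a + y (d (t - t₀))`, for `d < c`, a strict supersolution of `x' = -c x ^ p + K`. It starts from
infinity at `t₀`, so it exceeds `f` just after `t₀`, whatever the value of `f t₀`, and therefore up
to time `T`. Then `d → c` and `t₀ → 0`.
-/

open Filter Topology

/-- The solution of `y' = -y ^ p` on `(0, ∞)` with `y(0+) = ∞`, for `p > 1`: the profile of descent
from infinity. Its values outside `(0, ∞)` are meaningless. -/
noncomputable def descentProfile (p σ : ℝ) : ℝ := ((p - 1) * σ) ^ (-1 / (p - 1))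

section descentProfile

variable {p σ : ℝ}

theorem descentProfile_pos (hp : 1 < p) (hσ : 0 < σ) : 0 < descentProfile p σ :=
  Real.rpow_pos_of_pos (mul_pos (sub_pos.2 hp) hσ) _

theorem hasDerivAt_descentProfile (hp : 1 < p) (hσ : 0 < σ) :
    HasDerivAt (descentProfile p) (-descentProfile p σ ^ p) σ := by
  have hp' : 0 < p - 1 := sub_pos.2 hp
  have hbase : 0 < (p - 1) * σ := mul_pos hp' hσ
  have hexp : -1 / (p - 1) - 1 = -1 / (p - 1) * p := by field_simp; ring
  have hderiv := ((hasDerivAt_id σ).const_mul (p - 1)).rpow_const (p := -1 / (p - 1))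
    (.inl hbase.ne')
  refine hderiv.congr_deriv ?_
  rw [descentProfile, ← Real.rpow_mul hbase.le, ← hexp, id]
  field_simp

theorem tendsto_descentProfile_nhdsGT_zero (hp : 1 < p) :
    Tendsto (descentProfile p) (𝓝[>] 0) atTop := by
  have hp' : 0 < p - 1 := sub_pos.2 hp
  have hbase : Tendsto (fun σ => (p - 1) * σ) (𝓝[>] 0) (𝓝[>] 0) :=
    tendsto_nhdsWithin_iff.2 ⟨((continuous_const_mul (p - 1)).tendsto' 0 0 (mul_zero _)).mono_left
      nhdsWithin_le_nhds, eventually_mem_nhdsWithin.mono fun _ hσ => mul_pos hp' hσ⟩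
  exact (tendsto_rpow_neg_nhdsGT_zero (div_neg_of_neg_of_pos neg_one_lt_zero hp')).comp hbase

theorem descentProfile_three_le (hσ : 0 < σ) : descentProfile 3 σ ≤ σ ^ (-(1 : ℝ) / 2) := by
  rw [descentProfile, show (3 - 1 : ℝ) = 2 by norm_num]
  exact Real.rpow_le_rpow_of_nonpos hσ (by linarith) (by norm_num)

end descentProfile

section DifferentialInequality

variable {c K p T : ℝ} {f f' : ℝ → ℝ}

theorem neg_mul_equilibrium_add_rpow_add_le (hc : 0 < c) (hK : 0 ≤ K) (hp : 1 ≤ p) {y : ℝ}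
    (hy : 0 ≤ y) : -c * ((K / c) ^ (1 / p) + y) ^ p + K ≤ -c * y ^ p := by
  have hequil : c * ((K / c) ^ (1 / p)) ^ p = K := by
    rw [one_div, Real.rpow_inv_rpow (by positivity) (by positivity), mul_div_cancel₀ _ hc.ne']
  have hsuper := mul_le_mul_of_nonneg_left
    (Real.add_rpow_le_rpow_add (by positivity : 0 ≤ (K / c) ^ (1 / p)) hy hp) hc.le
  linarith

/-- The hypothesis `hf'` says that the lower right Dini derivative of `f` is at most `f'`. -/
theorem le_equilibrium_add_descentProfile_of_le_initial {d s t₀ : ℝ} (hK : 0 ≤ K) (hp : 1 < p)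
    (hd : 0 < d) (hdc : d < c) (ht₀ : t₀ < s) (hsT : s ≤ T) (hf : ContinuousOn f (Icc s T))
    (hf' : ∀ t ∈ Ico s T, ∀ r, f' t < r → ∃ᶠ z in 𝓝[>] t, slope f t z < r)
    (hineq : ∀ t ∈ Ico s T, 0 < f t → f' t ≤ -c * f t ^ p + K)
    (hs : f s ≤ (K / c) ^ (1 / p) + descentProfile p (d * (s - t₀))) :
    f T ≤ (K / c) ^ (1 / p) + descentProfile p (d * (T - t₀)) := by
  have hc : 0 < c := hd.trans hdc
  have harg : ∀ t, s ≤ t → 0 < d * (t - t₀) := fun t ht =>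
    mul_pos hd (sub_pos.2 (ht₀.trans_le ht))
  have hbarrier : ∀ t, s ≤ t →
      HasDerivAt (fun u => (K / c) ^ (1 / p) + descentProfile p (d * (u - t₀)))
        (-descentProfile p (d * (t - t₀)) ^ p * d) t := fun t ht => by
    have htime : HasDerivAt (fun u => d * (u - t₀)) d t := by
      simpa only [id, mul_one] using ((hasDerivAt_id t).sub_const t₀).const_mul d
    exact ((hasDerivAt_descentProfile hp (harg t ht)).comp t htime).const_add _
  refine image_le_of_liminf_slope_right_lt_deriv_boundary' hf hf' hs
    (fun t ht => (hbarrier t ht.1).continuousAt.continuousWithinAt)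
    (fun t ht => (hbarrier t ht.1).hasDerivWithinAt) (fun t ht htouch => ?_)
    (right_mem_Icc.2 hsT)
  have hy := descentProfile_pos hp (harg t ht.1)
  have hft : 0 < f t := htouch ▸ add_pos_of_nonneg_of_pos (by positivity) hy
  calc f' t
      ≤ -c * f t ^ p + K := hineq t ht hft
    _ ≤ -c * descentProfile p (d * (t - t₀)) ^ p :=
        htouch ▸ neg_mul_equilibrium_add_rpow_add_le hc hK hp.le hy.le
    _ < -descentProfile p (d * (t - t₀)) ^ p * d := by
        linarith [mul_lt_mul_of_pos_right hdc (Real.rpow_pos_of_pos hy p)]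

theorem le_equilibrium_add_descentProfile_of_lt {d t₀ : ℝ} (hK : 0 ≤ K) (hp : 1 < p)
    (hd : 0 < d) (hdc : d < c) (ht₀ : t₀ < T) (hf : ContinuousOn f (Icc t₀ T))
    (hf' : ∀ t ∈ Ioo t₀ T, ∀ r, f' t < r → ∃ᶠ z in 𝓝[>] t, slope f t z < r)
    (hineq : ∀ t ∈ Ioo t₀ T, 0 < f t → f' t ≤ -c * f t ^ p + K) :
    f T ≤ (K / c) ^ (1 / p) + descentProfile p (d * (T - t₀)) := by
  have hft₀ : Tendsto f (𝓝[>] t₀) (𝓝 (f t₀)) :=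
    (hf t₀ (left_mem_Icc.2 ht₀.le)).tendsto.mono_left
      (nhdsWithin_le_of_mem (Icc_mem_nhdsGT ht₀))
  have htime : Tendsto (fun s => d * (s - t₀)) (𝓝[>] t₀) (𝓝[>] 0) :=
    tendsto_nhdsWithin_iff.2 ⟨((by fun_prop : Continuous fun s => d * (s - t₀)).tendsto' t₀ 0
      (by ring)).mono_left nhdsWithin_le_nhds,
      eventually_mem_nhdsWithin.mono fun _ hs => mul_pos hd (sub_pos.2 hs)⟩
  have hblowup : Tendsto (fun s => (K / c) ^ (1 / p) + descentProfile p (d * (s - t₀)))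
      (𝓝[>] t₀) atTop :=
    tendsto_atTop_add_const_left _ _ ((tendsto_descentProfile_nhdsGT_zero hp).comp htime)
  obtain ⟨s, ⟨hfs, hblowup_s⟩, hs, hsT⟩ :=
    (((hft₀.eventually_lt_const (lt_add_one _)).and (hblowup.eventually_ge_atTop (f t₀ + 1))).and
      (Ioo_mem_nhdsGT ht₀)).exists
  have hsub : Ico s T ⊆ Ioo t₀ T := fun t ht => ⟨hs.trans_le ht.1, ht.2⟩
  exact le_equilibrium_add_descentProfile_of_le_initial hK hp hd hdc hs hsT.le
    (hf.mono (Icc_subset_Icc_left hs.le)) (fun t ht => hf' t (hsub ht))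
    (fun t ht => hineq t (hsub ht)) (hfs.le.trans hblowup_s)

theorem stmt15_general (hc : 0 < c) (hK : 0 ≤ K) (hp : 1 < p) (hT : 0 < T)
    (hf : ContinuousOn f (Ioc 0 T))
    (hf' : ∀ t ∈ Ioo 0 T, ∀ r, f' t < r → ∃ᶠ z in 𝓝[>] t, slope f t z < r)
    (hineq : ∀ t ∈ Ioo 0 T, 0 < f t → f' t ≤ -c * f t ^ p + K) :
    f T ≤ (K / c) ^ (1 / p) + ((p - 1) * (c * T)) ^ (-1 / (p - 1)) := by
  have hcT : 0 < c * T := mul_pos hc hT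
  have hbound : ∀ σ ∈ Ioo 0 (c * T), f T ≤ (K / c) ^ (1 / p) + descentProfile p σ := by
    rintro σ ⟨hσ, hσT⟩
    obtain ⟨τ, hτσ, hτT⟩ : ∃ τ, σ / c < τ ∧ τ < T := exists_between ((div_lt_iff₀' hc).2 hσT)
    have hτ : 0 < τ := (div_pos hσ hc).trans hτσ
    have hsub : Ioo (T - τ) T ⊆ Ioo 0 T := Ioo_subset_Ioo_left (sub_pos.2 hτT).le
    have h := le_equilibrium_add_descentProfile_of_lt hK hp (div_pos hσ hτ)
      ((div_lt_comm₀ hc hτ).1 hτσ) (sub_lt_self T hτ)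
      (hf.mono fun t ht => ⟨(sub_pos.2 hτT).trans_le ht.1, ht.2⟩)
      (fun t ht => hf' t (hsub ht)) (fun t ht => hineq t (hsub ht))
    rwa [sub_sub_cancel, div_mul_cancel₀ _ hτ.ne'] at h
  have hlim : Tendsto (fun σ => (K / c) ^ (1 / p) + descentProfile p σ) (𝓝[<] (c * T))
      (𝓝 ((K / c) ^ (1 / p) + descentProfile p (c * T))) :=
    ((hasDerivAt_descentProfile hp hcT).continuousAt.tendsto.const_add _).mono_left
      nhdsWithin_le_nhds
  exact ge_of_tendsto hlim (eventually_of_mem (Ioo_mem_nhdsLT hcT) hbound)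

end DifferentialInequality

/-- 'Coming down from infinity': if `f ≥ 0` is continuous on `[0,T]`,
differentiable on `(0,T)` with `f' ≤ −c₁ f³ + K`, then
`f(T) ≤ (2K/c₁)^{1/3} + (c₁ T)^{−1/2}`, uniformly in the initial value `f(0)`. -/
theorem stmt15 (c₁ K T : ℝ) (hc₁ : 0 < c₁) (hK : 0 ≤ K) (hT : 0 < T)
    (f f' : ℝ → ℝ) (hfc : ContinuousOn f (Icc 0 T))
    (hfnn : ∀ t ∈ Icc 0 T, 0 ≤ f t)
    (hderiv : ∀ t ∈ Ioo 0 T, HasDerivAt f (f' t) t)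
    (hineq : ∀ t ∈ Ioo 0 T, f' t ≤ -c₁ * f t ^ 3 + K) :
    f T ≤ (2 * K / c₁) ^ ((1 : ℝ) / 3) + (c₁ * T) ^ (-(1 : ℝ) / 2) :=
  (stmt15_general hc₁ hK (by norm_num : (1 : ℝ) < 3) hT (hfc.mono Ioc_subset_Icc_self)
    (fun t ht _ => (hderiv t ht).hasDerivWithinAt.liminf_right_slope_le)
    (fun t ht _ => mod_cast hineq t ht)).trans
    (add_le_add (by gcongr; linarith) (descentProfile_three_le (mul_pos hc₁ hT)))
end

section
/- Let k ≥ 1 and let z₁, …, z_k : [0,∞) → [0,∞) be continuous functions such that z_k(t) ≤ e^{−t} z_k(0) for all t ≥ 0, and z_l(t) ≤ e^{−t} z_l(0) + (1/4) ∫₀ᵗ e^{−(t−s)} z_{l+1}(s) ds for all t ≥ 0 and all 1 ≤ l < k. Then for every γ ∈ (0,1) there exists a constant C (depending only on k and γ) such that Σ_{l=1}^{k} z_l(t) ≤ C e^{−γ t} Σ_{l=1}^{k} z_l(0) for all t ≥ 0. -/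
open Set

/-!
Multiplying by `e^{ρt}` removes the damping: `w_l(t) = e^{ρt} z_l(t)` satisfies
`w_l(t) ≤ z_l(0) + a ∫₀ᵗ w_{l+1}(s) ds` and `w_k(t) ≤ z_k(0)`. Iterating these inequalities up the
chain gives the explicit polynomial bound `w_l(t) ≤ ∑_{i ≤ k-l} z_{l+i}(0) (at)^i / i!`. A loss
`δ = ρ - γ > 0` in the rate absorbs the polynomial, since `(at)^i / i! = (a/δ)^i (δt)^i / i!` and
`∑ (δt)^i / i! ≤ e^{δt}`.
-/

open MeasureTheory
open scoped Nat

lemma mul_integral_mul_pow_div_factorial (a t : ℝ) (i : ℕ) :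
    a * ∫ s in (0 : ℝ)..t, (a * s) ^ i / i ! = (a * t) ^ (i + 1) / (i + 1)! := by
  have hfact : ((i + 1)! : ℝ) = (i + 1) * i ! := by exact_mod_cast Nat.factorial_succ i
  simp only [mul_pow, intervalIntegral.integral_div, intervalIntegral.integral_const_mul,
    integral_pow, hfact]
  field_simp
  ring

lemma mul_integral_sum_mul_pow_div_factorial (a t : ℝ) (c : ℕ → ℝ) (n : ℕ) :
    a * ∫ s in (0 : ℝ)..t, ∑ i ∈ Finset.range n, c i * ((a * s) ^ i / i !) =
      ∑ i ∈ Finset.range n, c i * ((a * t) ^ (i + 1) / (i + 1)!) := by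
  rw [intervalIntegral.integral_finsetSum fun i _ ↦
    Continuous.intervalIntegrable (by fun_prop) _ _, Finset.mul_sum]
  refine Finset.sum_congr rfl fun i _ ↦ ?_
  rw [intervalIntegral.integral_const_mul, mul_left_comm, mul_integral_mul_pow_div_factorial]

lemma le_sum_mul_pow_div_factorial_of_le_add_integral {a : ℝ} (ha : 0 ≤ a) {n : ℕ}
    {w : ℕ → ℝ → ℝ} {c : ℕ → ℝ}
    (hint : ∀ i < n, ∀ t, 0 ≤ t → IntervalIntegrable (w (i + 1)) volume 0 t)
    (hlast : ∀ t, 0 ≤ t → w n t ≤ c n)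
    (hrec : ∀ i < n, ∀ t, 0 ≤ t → w i t ≤ c i + a * ∫ s in (0 : ℝ)..t, w (i + 1) s)
    {t : ℝ} (ht : 0 ≤ t) :
    w 0 t ≤ ∑ i ∈ Finset.range (n + 1), c i * ((a * t) ^ i / i !) := by
  induction n generalizing w c t with
  | zero => simpa using hlast t ht
  | succ n ih =>
    have tail_le : ∀ s, 0 ≤ s → w 1 s ≤
        ∑ i ∈ Finset.range (n + 1), c (i + 1) * ((a * s) ^ i / i !) :=
      fun s hs ↦ ih (w := fun i ↦ w (i + 1)) (c := fun i ↦ c (i + 1))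
        (fun i hi ↦ hint (i + 1) (by lia)) hlast (fun i hi ↦ hrec (i + 1) (by lia)) hs
    calc w 0 t ≤ c 0 + a * ∫ s in (0 : ℝ)..t, w 1 s := hrec 0 n.succ_pos t ht
      _ ≤ c 0 + a * ∫ s in (0 : ℝ)..t,
          ∑ i ∈ Finset.range (n + 1), c (i + 1) * ((a * s) ^ i / i !) := by
        gcongr
        exact intervalIntegral.integral_mono_on ht (hint 0 n.succ_pos t ht)
          (Continuous.intervalIntegrable (by fun_prop) _ _) fun s hs ↦ tail_le s hs.1
      _ = ∑ i ∈ Finset.range (n + 1 + 1), c i * ((a * t) ^ i / i !) := by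
        rw [mul_integral_sum_mul_pow_div_factorial a t (fun i ↦ c (i + 1)),
          Finset.sum_range_succ' _ (n + 1)]
        simp [add_comm]

lemma exp_mul_integral_exp_neg_mul (ρ t : ℝ) (f : ℝ → ℝ) :
    Real.exp (ρ * t) * ∫ s in (0 : ℝ)..t, Real.exp (-(ρ * (t - s))) * f s =
      ∫ s in (0 : ℝ)..t, Real.exp (ρ * s) * f s := by
  rw [← intervalIntegral.integral_const_mul]
  congr 1 with s
  rw [← mul_assoc, ← Real.exp_add]
  ring_nf

lemma exp_mul_le_sum_of_le_damped_convolution {a ρ : ℝ} (ha : 0 ≤ a) {n : ℕ} {z : ℕ → ℝ → ℝ}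
    (hint : ∀ i < n, ∀ t, 0 ≤ t → IntervalIntegrable (z (i + 1)) volume 0 t)
    (hlast : ∀ t, 0 ≤ t → z n t ≤ Real.exp (-(ρ * t)) * z n 0)
    (hrec : ∀ i < n, ∀ t, 0 ≤ t → z i t ≤ Real.exp (-(ρ * t)) * z i 0 +
      a * ∫ s in (0 : ℝ)..t, Real.exp (-(ρ * (t - s))) * z (i + 1) s)
    {t : ℝ} (ht : 0 ≤ t) :
    Real.exp (ρ * t) * z 0 t ≤ ∑ i ∈ Finset.range (n + 1), z i 0 * ((a * t) ^ i / i !) := by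
  have exp_mul_exp_neg (t x : ℝ) : Real.exp (ρ * t) * (Real.exp (-(ρ * t)) * x) = x := by
    rw [← mul_assoc, ← Real.exp_add, add_neg_cancel, Real.exp_zero, one_mul]
  refine le_sum_mul_pow_div_factorial_of_le_add_integral ha
    (w := fun i t ↦ Real.exp (ρ * t) * z i t) (c := fun i ↦ z i 0) ?_ ?_ ?_ ht
  · exact fun i hi t ht ↦ (hint i hi t ht).continuousOn_mul (by fun_prop)
  · intro t ht
    calc Real.exp (ρ * t) * z n t ≤ Real.exp (ρ * t) * (Real.exp (-(ρ * t)) * z n 0) := by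
          gcongr
          exact hlast t ht
      _ = z n 0 := exp_mul_exp_neg t _
  · intro i hi t ht
    calc Real.exp (ρ * t) * z i t
        ≤ Real.exp (ρ * t) * (Real.exp (-(ρ * t)) * z i 0 +
            a * ∫ s in (0 : ℝ)..t, Real.exp (-(ρ * (t - s))) * z (i + 1) s) := by
          gcongr
          exact hrec i hi t ht
      _ = z i 0 + a * ∫ s in (0 : ℝ)..t, Real.exp (ρ * s) * z (i + 1) s := by
          rw [mul_add, exp_mul_exp_neg, mul_left_comm, exp_mul_integral_exp_neg_mul]

lemma sum_mul_pow_div_factorial_le_mul_exp {q x : ℝ} (hq : 0 ≤ q) (hx : 0 ≤ x) (n : ℕ) :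
    ∑ i ∈ Finset.range n, (q * x) ^ i / i ! ≤ (1 + q) ^ n * Real.exp x := by
  calc ∑ i ∈ Finset.range n, (q * x) ^ i / i !
      ≤ ∑ i ∈ Finset.range n, (1 + q) ^ n * (x ^ i / i !) := by
        refine Finset.sum_le_sum fun i hi ↦ ?_
        have hpow : q ^ i ≤ (1 + q) ^ n :=
          (pow_le_pow_left₀ hq (by linarith) i).trans
            (pow_le_pow_right₀ (by linarith) (Finset.mem_range.1 hi).le)
        rw [mul_pow, mul_div_assoc]
        gcongr
    _ = (1 + q) ^ n * ∑ i ∈ Finset.range n, x ^ i / i ! := (Finset.mul_sum ..).symm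
    _ ≤ (1 + q) ^ n * Real.exp x := by
        gcongr
        exact Real.sum_le_exp_of_nonneg hx n

lemma le_mul_exp_of_le_damped_convolution {a ρ γ S : ℝ} (ha : 0 ≤ a) (hγ : γ < ρ) {n : ℕ}
    {z : ℕ → ℝ → ℝ}
    (hint : ∀ i < n, ∀ t, 0 ≤ t → IntervalIntegrable (z (i + 1)) volume 0 t)
    (hS : 0 ≤ S) (hinit : ∀ i ≤ n, z i 0 ≤ S)
    (hlast : ∀ t, 0 ≤ t → z n t ≤ Real.exp (-(ρ * t)) * z n 0)
    (hrec : ∀ i < n, ∀ t, 0 ≤ t → z i t ≤ Real.exp (-(ρ * t)) * z i 0 +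
      a * ∫ s in (0 : ℝ)..t, Real.exp (-(ρ * (t - s))) * z (i + 1) s)
    {t : ℝ} (ht : 0 ≤ t) :
    z 0 t ≤ (1 + a / (ρ - γ)) ^ (n + 1) * Real.exp (-γ * t) * S := by
  have hδ : 0 < ρ - γ := sub_pos.2 hγ
  have habsorb : ∑ i ∈ Finset.range (n + 1), (a * t) ^ i / i ! ≤
      (1 + a / (ρ - γ)) ^ (n + 1) * Real.exp ((ρ - γ) * t) := by
    have := sum_mul_pow_div_factorial_le_mul_exp (div_nonneg ha hδ.le)
      (mul_nonneg hδ.le ht) (n + 1)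
    rwa [← mul_assoc, div_mul_cancel₀ _ hδ.ne'] at this
  refine le_of_mul_le_mul_left ?_ (Real.exp_pos (ρ * t))
  calc Real.exp (ρ * t) * z 0 t ≤ ∑ i ∈ Finset.range (n + 1), z i 0 * ((a * t) ^ i / i !) :=
        exp_mul_le_sum_of_le_damped_convolution ha hint hlast hrec ht
    _ ≤ ∑ i ∈ Finset.range (n + 1), S * ((a * t) ^ i / i !) := by
        gcongr with i hi
        exact hinit i (Finset.mem_range_succ_iff.1 hi)
    _ = S * ∑ i ∈ Finset.range (n + 1), (a * t) ^ i / i ! := (Finset.mul_sum ..).symm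
    _ ≤ S * ((1 + a / (ρ - γ)) ^ (n + 1) * Real.exp ((ρ - γ) * t)) := by gcongr
    _ = Real.exp (ρ * t) * ((1 + a / (ρ - γ)) ^ (n + 1) * Real.exp (-γ * t) * S) := by
        rw [show (ρ - γ) * t = ρ * t + -γ * t by ring, Real.exp_add]
        ring

theorem stmt16_general (k : ℕ) (hk : 1 ≤ k) {a ρ γ : ℝ} (ha : 0 ≤ a) (hγ : γ < ρ) :
    ∃ C : ℝ, 0 < C ∧
      ∀ z : ℕ → ℝ → ℝ,
        (∀ l, 1 ≤ l → l < k → ∀ t, 0 ≤ t → IntervalIntegrable (z (l + 1)) volume 0 t) →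
        (∀ l, 1 ≤ l → l ≤ k → 0 ≤ z l 0) →
        (∀ t, 0 ≤ t → z k t ≤ Real.exp (-(ρ * t)) * z k 0) →
        (∀ l, 1 ≤ l → l < k → ∀ t, 0 ≤ t →
          z l t ≤ Real.exp (-(ρ * t)) * z l 0 +
            a * ∫ s in (0 : ℝ)..t, Real.exp (-(ρ * (t - s))) * z (l + 1) s) →
        ∀ t, 0 ≤ t →
          ∑ l ∈ Finset.Icc 1 k, z l t ≤
            C * Real.exp (-γ * t) * ∑ l ∈ Finset.Icc 1 k, z l 0 := by
  have hq : 0 ≤ a / (ρ - γ) := div_nonneg ha (sub_pos.2 hγ).le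
  refine ⟨k * (1 + a / (ρ - γ)) ^ k, by positivity, fun z hint hnonneg hlast hrec t ht ↦ ?_⟩
  set S := ∑ l ∈ Finset.Icc 1 k, z l 0
  have initial_nonneg : ∀ l ∈ Finset.Icc 1 k, 0 ≤ z l 0 := fun l hl ↦
    hnonneg l (Finset.mem_Icc.1 hl).1 (Finset.mem_Icc.1 hl).2
  have hS : 0 ≤ S := Finset.sum_nonneg initial_nonneg
  have component_le : ∀ l ∈ Finset.Icc 1 k,
      z l t ≤ (1 + a / (ρ - γ)) ^ k * Real.exp (-γ * t) * S := by
    intro l hl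
    obtain ⟨hl1, hlk⟩ := Finset.mem_Icc.1 hl
    obtain ⟨n, rfl⟩ := Nat.exists_eq_add_of_le hlk
    calc z l t ≤ (1 + a / (ρ - γ)) ^ (n + 1) * Real.exp (-γ * t) * S :=
          le_mul_exp_of_le_damped_convolution ha hγ (z := fun i ↦ z (l + i))
            (fun i hi ↦ hint (l + i) (by lia) (by lia)) hS
            (fun i hi ↦ Finset.single_le_sum initial_nonneg (Finset.mem_Icc.2 ⟨by lia, by lia⟩))
            hlast (fun i hi ↦ hrec (l + i) (by lia) (by lia)) ht
      _ ≤ (1 + a / (ρ - γ)) ^ (l + n) * Real.exp (-γ * t) * S := by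
          gcongr ?_ * _ * _
          exact pow_le_pow_right₀ (by linarith) (by lia)
  calc ∑ l ∈ Finset.Icc 1 k, z l t
      ≤ (Finset.Icc 1 k).card • ((1 + a / (ρ - γ)) ^ k * Real.exp (-γ * t) * S) :=
        Finset.sum_le_card_nsmul _ _ _ component_le
    _ = k * (1 + a / (ρ - γ)) ^ k * Real.exp (-γ * t) * S := by
        rw [Nat.card_Icc, Nat.add_sub_cancel, nsmul_eq_mul]
        ring

/-- Propagation of exponential decay through a chain of damped
convolution inequalities: if `z_k(t) ≤ e^{−t} z_k(0)` and each `z_l` is bounded by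
`e^{−t} z_l(0) + (1/4)∫₀ᵗ e^{−(t−s)} z_{l+1}(s) ds`, then for every `γ ∈ (0,1)` the whole
family decays like `C e^{−γt}` times the initial data. -/
theorem stmt16 (k : ℕ) (hk : 1 ≤ k) (γ : ℝ) (hγ0 : 0 < γ) (hγ1 : γ < 1) :
    ∃ C : ℝ, 0 < C ∧
      ∀ z : ℕ → ℝ → ℝ,
        (∀ l, 1 ≤ l → l ≤ k → ContinuousOn (z l) (Ici 0)) →
        (∀ l, 1 ≤ l → l ≤ k → ∀ t ∈ Ici (0 : ℝ), 0 ≤ z l t) →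
        (∀ t ∈ Ici (0 : ℝ), z k t ≤ Real.exp (-t) * z k 0) →
        (∀ l, 1 ≤ l → l < k → ∀ t ∈ Ici (0 : ℝ),
          z l t ≤ Real.exp (-t) * z l 0 +
            (1 / 4) * ∫ s in (0 : ℝ)..t, Real.exp (-(t - s)) * z (l + 1) s) →
        ∀ t ∈ Ici (0 : ℝ),
          ∑ l ∈ Finset.Icc 1 k, z l t ≤
            C * Real.exp (-γ * t) * ∑ l ∈ Finset.Icc 1 k, z l 0 := by
  obtain ⟨C, hC, bound⟩ := stmt16_general k hk (a := 1 / 4) (by norm_num) hγ1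
  refine ⟨C, hC, fun z hcont hnonneg hlast hrec ↦ bound z (fun l _ hlk t ht ↦ ?_)
    (fun l hl1 hlk ↦ hnonneg l hl1 hlk 0 self_mem_Ici) (by simpa using hlast) (by simpa using hrec)⟩
  exact ((hcont (l + 1) (by lia) hlk).mono (uIcc_of_le ht ▸ Icc_subset_Ici_self)).intervalIntegrable
end
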